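/- Let Γ ⊂ SO(k) be a nontrivial finite group acting freely on the unit sphere S^{k-1}. There exists an angle θ₀ > 0, depending only on Γ, such that for every geodesic loop in the smooth part of ℝ^k/Γ (i.e., a line segment in ℝ^k joining two distinct points x and g·x of the same Γ-orbit, with g ≠ id), the angle between the two tangent vectors of the loop at its base point is at least θ₀. -/

import Mathlib

/-!
If `f` is a linear isometry with `f^[n] x = x` and no nonzero fixed vector, then the orbit sum of
`x` is fixed by `f`, hence zero. Write `θ` for the angle from `x` to `f x`. The closed polygon
`x, f x, …, f^[n] x` has `n` sides of angular length `θ`, so going around it in either direction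
shows that `f^[i] x` is within angle `min (i * θ) ((n - i) * θ)` of `x`. If `θ < 2 * π / n`, the
cosines of these angles dominate the numbers `cos (2 * π * i / n)`, strictly for `i = 1`. But both
families have sum zero: the first because the orbit sum vanishes, the second because the `n`-th
roots of unity do.

For a loop, `g` maps the incoming tangent vector `x - g⁻¹ x` to the outgoing one `g x - x`, so its
angle is at least `2 * π / n` as soon as `g ^ n = 1`.
-/

open Finset Function InnerProductGeometry Real

lemma sum_range_cos_two_pi_mul_div {n : ℕ} (hn : 1 < n) :
    ∑ i ∈ range n, cos (2 * π * i / n) = 0 := by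
  have hsum := (Complex.isPrimitiveRoot_exp n (by lia)).geom_sum_eq_zero hn
  have hre (i : ℕ) : (Complex.exp (2 * π * Complex.I / n) ^ i).re = cos (2 * π * i / n) := by
    rw [← Complex.exp_nat_mul, ← Complex.exp_ofReal_mul_I_re]
    congr 2
    push_cast
    ring
  simpa only [Complex.re_sum, hre, Complex.zero_re] using congrArg Complex.re hsum

lemma cos_le_cos_of_le_of_le_two_pi_sub {φ α : ℝ} (hφ : 0 ≤ φ) (hφα : φ ≤ α)
    (hφα' : φ ≤ 2 * π - α) : cos α ≤ cos φ := by
  rcases le_total α π with hα | hα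
  · exact cos_le_cos_of_nonneg_of_le_pi hφ hα hφα
  · rw [← cos_two_pi_sub α]
    exact cos_le_cos_of_nonneg_of_le_pi hφ (by linarith) hφα'

lemma isFixedPt_birkhoffSum_id {M F : Type*} [AddCommGroup M] [FunLike F M M]
    [AddMonoidHomClass F M M] (f : F) {n : ℕ} {x : M} (hx : IsPeriodicPt f n x) :
    IsFixedPt f (birkhoffSum f id n x) :=
  calc f (birkhoffSum f id n x) = birkhoffSum f id n (f x) := by
        simp only [birkhoffSum, map_sum, id_eq, ← iterate_succ_apply, iterate_succ_apply']
    _ = birkhoffSum f id n x := by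
        rw [← sub_eq_zero, birkhoffSum_apply_sub_birkhoffSum, hx.eq, sub_self]

section InnerProductSpace

variable {V : Type*} [NormedAddCommGroup V] [InnerProductSpace ℝ V]

lemma sum_cos_angle_eq_zero {ι : Type*} {s : Finset ι} {v : ι → V} {r : ℝ}
    (hr : ∀ i ∈ s, ‖v i‖ = r) (hv : ∑ i ∈ s, v i = 0) (x : V) :
    ∑ i ∈ s, cos (angle (v i) x) = 0 :=
  calc ∑ i ∈ s, cos (angle (v i) x) = ∑ i ∈ s, inner ℝ (v i) x / (r * ‖x‖) :=
        sum_congr rfl fun i hi => by rw [cos_angle, hr i hi]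
    _ = 0 := by rw [← sum_div, ← sum_inner, hv, inner_zero_left, zero_div]

lemma angle_iterate_map (f : V →ₗᵢ[ℝ] V) (n : ℕ) (x y : V) :
    angle (f^[n] x) (f^[n] y) = angle x y := by
  rw [← LinearIsometry.coe_pow, LinearIsometry.angle_map]

lemma angle_iterate_self_le (f : V →ₗᵢ[ℝ] V) {x : V} (hx : x ≠ 0) (n : ℕ) :
    angle (f^[n] x) x ≤ n * angle (f x) x := by
  induction n with
  | zero => simp [angle_self hx]
  | succ n ih =>
    calc angle (f^[n + 1] x) x ≤ angle (f^[n + 1] x) (f x) + angle (f x) x :=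
          angle_le_angle_add_angle _ _ _
      _ = angle (f^[n] x) x + angle (f x) x := by rw [iterate_succ_apply', f.angle_map]
      _ ≤ n * angle (f x) x + angle (f x) x := by gcongr
      _ = (n + 1 : ℕ) * angle (f x) x := by push_cast; ring

lemma angle_iterate_self_le_of_isPeriodicPt (f : V →ₗᵢ[ℝ] V) {x : V} (hx : x ≠ 0) {n i : ℕ}
    (hper : IsPeriodicPt f n x) (hi : i ≤ n) :
    angle (f^[i] x) x ≤ (n - i) * angle (f x) x :=
  calc angle (f^[i] x) x = angle (f^[n - i] (f^[i] x)) (f^[n - i] x) :=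
        (angle_iterate_map f _ _ _).symm
    _ = angle (f^[n - i] x) x := by
        rw [← iterate_add_apply, Nat.sub_add_cancel hi, hper.eq, angle_comm]
    _ ≤ (n - i) * angle (f x) x := by
        simpa only [Nat.cast_sub hi] using angle_iterate_self_le f hx (n - i)

lemma cos_two_pi_mul_div_le_cos_angle_iterate (f : V →ₗᵢ[ℝ] V) {x : V} (hx : x ≠ 0) {n i : ℕ}
    (hper : IsPeriodicPt f n x) (hi : i < n) (hθ : angle (f x) x ≤ 2 * π / n) :
    cos (2 * π * i / n) ≤ cos (angle (f^[i] x) x) := by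
  have hn : (0 : ℝ) < n := by exact_mod_cast i.zero_le.trans_lt hi
  have hi' : (i : ℝ) ≤ n := by exact_mod_cast hi.le
  refine cos_le_cos_of_le_of_le_two_pi_sub (angle_nonneg _ _) ?_ ?_
  · calc angle (f^[i] x) x ≤ i * angle (f x) x := angle_iterate_self_le f hx i
      _ ≤ i * (2 * π / n) := by gcongr
      _ = 2 * π * i / n := by ring
  · calc angle (f^[i] x) x ≤ (n - i) * angle (f x) x :=
          angle_iterate_self_le_of_isPeriodicPt f hx hper hi.le
      _ ≤ (n - i) * (2 * π / n) := mul_le_mul_of_nonneg_left hθ (sub_nonneg.2 hi')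
      _ = 2 * π - 2 * π * i / n := by field_simp

theorem two_pi_div_le_angle_of_birkhoffSum_eq_zero (f : V →ₗᵢ[ℝ] V) {x : V} (hx : x ≠ 0) {n : ℕ}
    (hn : 0 < n) (hper : IsPeriodicPt f n x) (hsum : birkhoffSum f id n x = 0) :
    2 * π / n ≤ angle (f x) x := by
  have hn1 : 1 < n := by
    refine lt_of_le_of_ne hn ?_
    rintro rfl
    exact hx (by rwa [birkhoffSum_one] at hsum)
  by_contra! hθ
  have hnorm (i : ℕ) : ‖f^[i] x‖ = ‖x‖ := by rw [← LinearIsometry.coe_pow, (f ^ i).norm_map]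
  have hπ : 2 * π / n ≤ π := by
    rw [div_le_iff₀ (by positivity), mul_comm]
    gcongr
    exact_mod_cast hn1
  have hlt : ∑ i ∈ range n, cos (2 * π * i / n) < ∑ i ∈ range n, cos (angle (f^[i] x) x) := by
    refine sum_lt_sum (fun i hi => cos_two_pi_mul_div_le_cos_angle_iterate f hx hper
      (mem_range.1 hi) hθ.le) ⟨1, mem_range.2 hn1, ?_⟩
    simpa only [Nat.cast_one, mul_one, iterate_one] using
      cos_lt_cos_of_nonneg_of_le_pi (angle_nonneg _ _) hπ hθ
  rw [sum_range_cos_two_pi_mul_div hn1, sum_cos_angle_eq_zero (fun i _ => hnorm i) hsum] at hlt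
  exact hlt.false

theorem two_pi_div_le_angle_of_isPeriodicPt {f : V →ₗᵢ[ℝ] V} (hf : ∀ y, y ≠ 0 → f y ≠ y) {x : V}
    (hx : x ≠ 0) {n : ℕ} (hn : 0 < n) (hper : IsPeriodicPt f n x) :
    2 * π / n ≤ angle (f x) x :=
  two_pi_div_le_angle_of_birkhoffSum_eq_zero f hx hn hper <|
    not_imp_not.1 (hf _) (isFixedPt_birkhoffSum_id f hper)

theorem two_pi_div_le_angle_sub_inv {g : V ≃ₗᵢ[ℝ] V} (hg : ∀ y, y ≠ 0 → g y ≠ y) {n : ℕ}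
    (hn : 0 < n) (hgn : g ^ n = 1) {x : V} (hx : x ≠ 0) :
    2 * π / n ≤ angle (g x - x) (x - g⁻¹ x) := by
  have hgx : g (g⁻¹ x) = x := g.apply_symm_apply x
  have hincoming : x - g⁻¹ x ≠ 0 := fun h => hg x hx <| by
    rwa [← sub_eq_zero.1 h] at hgx
  have hper : IsPeriodicPt g n (x - g⁻¹ x) := by
    rw [IsPeriodicPt, ← hom_coe_pow (fun e : V ≃ₗᵢ[ℝ] V => ⇑e) rfl (fun _ _ => rfl), hgn]
    exact isFixedPt_id _
  simpa only [LinearIsometryEquiv.coe_toLinearIsometry, map_sub, hgx] using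
    two_pi_div_le_angle_of_isPeriodicPt (f := g.toLinearIsometry) hg hincoming hn hper

theorem stmt3_general {Γ : Subgroup (V ≃ₗᵢ[ℝ] V)} (hΓ : Monoid.ExponentExists Γ)
    (hfree : ∀ g ∈ Γ, g ≠ 1 → ∀ x : V, x ≠ 0 → g x ≠ x) {g : V ≃ₗᵢ[ℝ] V} (hg : g ∈ Γ)
    (hg1 : g ≠ 1) {x : V} (hx : x ≠ 0) :
    2 * π / Monoid.exponent Γ ≤ angle (g x - x) (x - g⁻¹ x) :=
  two_pi_div_le_angle_sub_inv (hfree g hg hg1) hΓ.exponent_pos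
    (congrArg Subtype.val (Monoid.pow_exponent_eq_one (⟨g, hg⟩ : Γ))) hx

end InnerProductSpace

/-- For a nontrivial finite group `Γ ⊂ SO(k)` acting freely on the unit sphere, there is an angle
`θ₀ > 0`, depending only on `Γ`, bounding below the angle at the base point of any geodesic loop
in the smooth part of `ℝ^k/Γ`.  Such a loop lifts to a segment from `x ≠ 0` to `g x` with
`g ≠ 1`; its two tangent vectors at the base point are `g x − x` (outgoing) and `x − g⁻¹ x`
(incoming, transported back by `g⁻¹`). -/
theorem stmt3 {k : ℕ} (hk : 2 ≤ k)
    (Γ : Subgroup (EuclideanSpace ℝ (Fin k) ≃ₗᵢ[ℝ] EuclideanSpace ℝ (Fin k)))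
    (hfin : (Γ : Set (EuclideanSpace ℝ (Fin k) ≃ₗᵢ[ℝ] EuclideanSpace ℝ (Fin k))).Finite)
    (hnt : Γ ≠ ⊥)
    (hSO : ∀ g ∈ Γ, LinearMap.det
      ((g : EuclideanSpace ℝ (Fin k) ≃ₗᵢ[ℝ] EuclideanSpace ℝ (Fin k)).toLinearEquiv
        : EuclideanSpace ℝ (Fin k) →ₗ[ℝ] EuclideanSpace ℝ (Fin k)) = 1)
    (hfree : ∀ g ∈ Γ, g ≠ 1 → ∀ x : EuclideanSpace ℝ (Fin k), x ≠ 0 → g x ≠ x) :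
    ∃ θ₀ > 0, ∀ g ∈ Γ, g ≠ 1 → ∀ x : EuclideanSpace ℝ (Fin k), x ≠ 0 →
      θ₀ ≤ InnerProductGeometry.angle (g x - x) (x - g⁻¹ x) := by
  have hΓ : Monoid.ExponentExists Γ := have : Finite Γ := hfin; .of_finite
  exact ⟨2 * π / Monoid.exponent Γ, div_pos two_pi_pos (mod_cast hΓ.exponent_pos),
    fun _ hg hg1 _ hx => stmt3_general hΓ hfree hg hg1 hx⟩
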